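/- Let d ≥ 1 and let f ∈ C^∞(ℝ^d) satisfy ‖∂^β f‖_{L²(ℝ^d)} ≤ C₁ C₂^{|β|} β! for all multi-indices β ∈ ℕ₀^d, with constants C₁, C₂ > 0. Let σ ∈ (0,1] be such that 2C₂σ < 1, and let B ⊂ ℝ^d be an open Euclidean ball of radius τ with 0 < τ < σ/d. Then there exists a constant C₀ > 0 such that for all multi-indices α ∈ ℕ₀^d with |α| = m, one has ‖∂^α f‖_{L^∞(B)} ≤ C₀ · (m+d)!/σ^m; consequently Σ_{α ∈ ℕ₀^d} (‖∂^α f‖_{L^∞(B)}/α!) · τ^{|α|} < ∞. -/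

import Mathlib

open MeasureTheory
open scoped ENNReal

/-- The partial derivative in the `i`-th coordinate direction. -/
noncomputable def pderivE {d : ℕ} (i : Fin d) (f : EuclideanSpace ℝ (Fin d) → ℝ) :
    EuclideanSpace ℝ (Fin d) → ℝ :=
  fun x => fderiv ℝ f x (EuclideanSpace.single i 1)

/-- The multi-index partial derivative `∂^β f` for `β ∈ ℕ₀^d`. -/
noncomputable def mderiv {d : ℕ} (β : Fin d → ℕ) (f : EuclideanSpace ℝ (Fin d) → ℝ) :
    EuclideanSpace ℝ (Fin d) → ℝ :=
  (List.finRange d).foldr (fun i g => (pderivE i)^[β i] g) f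

/-!
Integrating by parts against the weight `t + 1 - s` on `[t, t + 1]` bounds `|h t|` by the integral
of `|h| + |h'|` over that interval. Applying this in every coordinate bounds `|g x|` by the sum,
over the `2 ^ d` mixed derivatives `∂^{e_T} g` of order at most one in each variable, of their `L¹`
norms over a unit cube with corner `x`; there Hölder's inequality replaces `L¹` by `L^p` at no cost.
For `g = ∂^α f` this gives `|∂^α f| ≤ C₁ (1 + C₂)^d C₂^|α| ∏ (α_i + 1)!` on all of `ℝ^d`, and
`∏ (α_i + 1)!` is at most `(|α| + d)!` and exceeds `α!` only by the polynomial factor `∏ (α_i + 1)`.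
-/

section IndicatorMultiIndex

variable {ι : Type*} [DecidableEq ι]

/-- The multi-index `e_T` equal to `1` on `T` and `0` elsewhere, so that `∂^{e_T}` differentiates
exactly once in each of the directions in `T`. -/
def indicatorMultiIndex (T : Finset ι) : ι → ℕ :=
  fun i => if i ∈ T then 1 else 0

theorem indicatorMultiIndex_empty : indicatorMultiIndex (∅ : Finset ι) = 0 :=
  rfl

theorem indicatorMultiIndex_insert {i : ι} {T : Finset ι} (hi : i ∉ T) :
    indicatorMultiIndex (insert i T) = Pi.single i 1 + indicatorMultiIndex T := by
  ext k
  obtain rfl | hk := eq_or_ne k i <;> simp [indicatorMultiIndex, *]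

theorem indicatorMultiIndex_le_one (T : Finset ι) : indicatorMultiIndex T ≤ 1 := fun i => by
  unfold indicatorMultiIndex
  split_ifs <;> simp

theorem sum_indicatorMultiIndex [Fintype ι] (T : Finset ι) :
    ∑ i, indicatorMultiIndex T i = T.card := by
  simp [indicatorMultiIndex]

end IndicatorMultiIndex

section UnitInterval

variable {E : Type*} [NormedAddCommGroup E] [NormedSpace ℝ E] [CompleteSpace E]
  {h h' : ℝ → E} {t : ℝ}

theorem eq_integral_sub_smul_deriv
    (hh : ∀ s ∈ Set.Icc t (t + 1), HasDerivWithinAt h (h' s) (Set.Icc t (t + 1)) s)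
    (hh' : IntervalIntegrable h' volume t (t + 1)) :
    h t = ∫ s in t..(t + 1), (h s - (t + 1 - s) • h' s) := by
  have huIcc : Set.uIcc t (t + 1) = Set.Icc t (t + 1) := Set.uIcc_of_le (by linarith)
  have hint : IntervalIntegrable h volume t (t + 1) :=
    ContinuousOn.intervalIntegrable (huIcc ▸ fun s hs => (hh s hs).continuousWithinAt)
  have hweight : ∀ s : ℝ, HasDerivAt (fun s => t + 1 - s) (-1) s := fun s => by
    simpa using (hasDerivAt_id s).const_sub (t + 1)
  have hparts := intervalIntegral.integral_smul_deriv_eq_deriv_smul_of_hasDerivWithinAt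
    (fun s _ => (hweight s).hasDerivWithinAt) (huIcc ▸ hh)
    intervalIntegrable_const hh'
  rw [intervalIntegral.integral_sub hint (hh'.continuousOn_smul (by fun_prop)), hparts]
  simp

theorem enorm_le_setLIntegral_enorm_add_enorm_deriv
    (hh : ∀ s ∈ Set.Icc t (t + 1), HasDerivWithinAt h (h' s) (Set.Icc t (t + 1)) s)
    (hh' : IntervalIntegrable h' volume t (t + 1)) :
    ‖h t‖ₑ ≤ ∫⁻ s in Set.Ioc t (t + 1), (‖h s‖ₑ + ‖h' s‖ₑ) := by
  rw [eq_integral_sub_smul_deriv hh hh', intervalIntegral.integral_of_le (by linarith)]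
  refine (enorm_integral_le_lintegral_enorm _).trans
    (setLIntegral_mono_ae' measurableSet_Ioc (ae_of_all _ fun s hs => ?_))
  have hweight : ‖t + 1 - s‖ₑ ≤ 1 := by
    rw [Real.enorm_eq_ofReal (by linarith [hs.2]), ENNReal.ofReal_le_one]
    linarith [hs.1]
  calc ‖h s - (t + 1 - s) • h' s‖ₑ
      ≤ ‖h s‖ₑ + ‖t + 1 - s‖ₑ * ‖h' s‖ₑ := by
        simpa only [enorm_smul] using enorm_sub_le (a := h s) (b := (t + 1 - s) • h' s)
    _ ≤ ‖h s‖ₑ + ‖h' s‖ₑ := by gcongr; exact mul_le_of_le_one_left' hweight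

end UnitInterval

section PartialDerivatives

variable {d : ℕ} {f g : EuclideanSpace ℝ (Fin d) → ℝ}

theorem contDiff_pderivE {m n : WithTop ℕ∞} (i : Fin d) (hg : ContDiff ℝ n g) (hmn : m + 1 ≤ n) :
    ContDiff ℝ m (pderivE i g) :=
  (hg.fderiv_right hmn).clm_apply contDiff_const

theorem contDiff_iterate_pderivE (i : Fin d) (k : ℕ) (hg : ContDiff ℝ (⊤ : ℕ∞) g) :
    ContDiff ℝ (⊤ : ℕ∞) ((pderivE i)^[k] g) := by
  induction k with
  | zero => exact hg
  | succ k ih =>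
    rw [Function.iterate_succ_apply']
    exact contDiff_pderivE i ih (by simp)

theorem contDiff_foldr_iterate_pderivE (β : Fin d → ℕ) (l : List (Fin d))
    (hf : ContDiff ℝ (⊤ : ℕ∞) f) :
    ContDiff ℝ (⊤ : ℕ∞) (l.foldr (fun i g => (pderivE i)^[β i] g) f) := by
  induction l with
  | nil => exact hf
  | cons j l ih => exact contDiff_iterate_pderivE j (β j) ih

theorem contDiff_mderiv (β : Fin d → ℕ) (hf : ContDiff ℝ (⊤ : ℕ∞) f) :
    ContDiff ℝ (⊤ : ℕ∞) (mderiv β f) :=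
  contDiff_foldr_iterate_pderivE β _ hf

theorem pderivE_comm (i j : Fin d) (hg : ContDiff ℝ 2 g) :
    pderivE i (pderivE j g) = pderivE j (pderivE i g) := by
  ext x
  have hdiff : DifferentiableAt ℝ (fderiv ℝ g) x :=
    (hg.fderiv_right (m := 1) (by norm_num)).differentiable (by simp) x
  have hsymm : IsSymmSndFDerivAt ℝ g x := hg.contDiffAt.isSymmSndFDerivAt (by simp)
  unfold pderivE
  rw [fderiv_clm_apply hdiff (differentiableAt_const _),
    fderiv_clm_apply hdiff (differentiableAt_const _)]
  simpa using hsymm _ _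

theorem pderivE_iterate_comm (i j : Fin d) (k : ℕ) (hg : ContDiff ℝ (⊤ : ℕ∞) g) :
    pderivE i ((pderivE j)^[k] g) = (pderivE j)^[k] (pderivE i g) := by
  induction k with
  | zero => rfl
  | succ k ih =>
    have hk : ContDiff ℝ 2 ((pderivE j)^[k] g) :=
      (contDiff_iterate_pderivE j k hg).of_le (WithTop.coe_le_coe.2 le_top)
    rw [Function.iterate_succ_apply', Function.iterate_succ_apply', ← ih, pderivE_comm i j hk]

theorem foldr_iterate_pderivE_add_single (β : Fin d → ℕ) {i : Fin d} {l : List (Fin d)}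
    (hl : l.Nodup) (hi : i ∈ l) (hf : ContDiff ℝ (⊤ : ℕ∞) f) :
    l.foldr (fun k g => (pderivE k)^[(β + Pi.single i 1 : Fin d → ℕ) k] g) f =
      pderivE i (l.foldr (fun k g => (pderivE k)^[β k] g) f) := by
  induction l with
  | nil => simp at hi
  | cons j l ih =>
    obtain ⟨hjl, hl⟩ := List.nodup_cons.1 hl
    rw [List.foldr_cons, List.foldr_cons]
    obtain rfl | hij := eq_or_ne i j
    · have htail : l.foldr (fun k g => (pderivE k)^[(β + Pi.single i 1 : Fin d → ℕ) k] g) f =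
          l.foldr (fun k g => (pderivE k)^[β k] g) f :=
        List.foldr_ext _ _ _ fun k hk g => by simp [ne_of_mem_of_not_mem hk hjl]
      rw [htail, Pi.add_apply, Pi.single_eq_same, Function.iterate_succ_apply']
    · rw [ih hl (List.mem_of_ne_of_mem hij hi), Pi.add_apply, Pi.single_eq_of_ne' hij, add_zero,
        pderivE_iterate_comm i j _ (contDiff_foldr_iterate_pderivE β l hf)]

theorem mderiv_add_single (β : Fin d → ℕ) (i : Fin d) (hf : ContDiff ℝ (⊤ : ℕ∞) f) :
    mderiv (β + Pi.single i 1) f = pderivE i (mderiv β f) :=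
  foldr_iterate_pderivE_add_single β (List.nodup_finRange d) (List.mem_finRange i) hf

end PartialDerivatives

section Sobolev

variable {d : ℕ} {f g : EuclideanSpace ℝ (Fin d) → ℝ}

theorem hasDerivAt_comp_toLp_update (hg : Differentiable ℝ g) (x : Fin d → ℝ) (i : Fin d) (s : ℝ) :
    HasDerivAt (fun s => g (WithLp.toLp 2 (Function.update x i s)))
      (pderivE i g (WithLp.toLp 2 (Function.update x i s))) s := by
  have hline : HasDerivAt (fun s => (WithLp.toLp 2 (Function.update x i s) :
      EuclideanSpace ℝ (Fin d))) (EuclideanSpace.single i 1) s :=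
    (PiLp.continuousLinearEquiv 2 ℝ (fun _ : Fin d => ℝ)).symm.hasFDerivAt.comp_hasDerivAt s
      (hasDerivAt_update x i s)
  exact (hg _).hasFDerivAt.comp_hasDerivAt s hline

theorem enorm_le_setLIntegral_enorm_add_enorm_pderivE (hg : ContDiff ℝ 1 g) (x : Fin d → ℝ)
    (i : Fin d) :
    ‖g (WithLp.toLp 2 x)‖ₑ ≤ ∫⁻ s in Set.Ioc (x i) (x i + 1),
      (‖g (WithLp.toLp 2 (Function.update x i s))‖ₑ +
        ‖pderivE i g (WithLp.toLp 2 (Function.update x i s))‖ₑ) := by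
  have hcont : Continuous (pderivE i g) := (contDiff_pderivE (m := 0) i hg (by simp)).continuous
  simpa only [Function.update_eq_self] using enorm_le_setLIntegral_enorm_add_enorm_deriv (t := x i)
    (fun s _ => (hasDerivAt_comp_toLp_update (hg.differentiable (by simp)) x i s).hasDerivWithinAt)
    (Continuous.intervalIntegrable (by fun_prop) _ _)

-- The cube is anchored at `a` instead of `x` so that it stays fixed when the induction moves `x`
-- along a coordinate outside `S`.
theorem enorm_mderiv_le_sum_lmarginal (hf : ContDiff ℝ (⊤ : ℕ∞) f) (a : Fin d → ℝ)
    (S : Finset (Fin d)) (β : Fin d → ℕ) (x : Fin d → ℝ) (hx : ∀ i ∈ S, x i = a i) :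
    ‖mderiv β f (WithLp.toLp 2 x)‖ₑ ≤ ∑ T ∈ S.powerset,
      (∫⋯∫⁻_S, fun y => ‖mderiv (β + indicatorMultiIndex T) f (WithLp.toLp 2 y)‖ₑ
        ∂fun i => volume.restrict (Set.Ioc (a i) (a i + 1))) x := by
  induction S using Finset.induction_on generalizing β x with
  | empty => simp [indicatorMultiIndex_empty]
  | insert i S hi ih =>
    set μ : Fin d → Measure ℝ := fun i => volume.restrict (Set.Ioc (a i) (a i + 1))
    have hmeas (γ : Fin d → ℕ) :
        Measurable fun y : Fin d → ℝ => ‖mderiv γ f (WithLp.toLp 2 y)‖ₑ :=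
      ((contDiff_mderiv γ hf).continuous.comp (by fun_prop)).measurable.enorm
    have hmeasS (γ : Fin d → ℕ) : Measurable fun s =>
        (∫⋯∫⁻_S, fun y => ‖mderiv γ f (WithLp.toLp 2 y)‖ₑ ∂μ) (Function.update x i s) :=
      ((hmeas γ).lmarginal μ).comp (measurable_update x)
    have hslice (γ : Fin d → ℕ) (s : ℝ) := ih γ (Function.update x i s) fun j hj => by
      rw [Function.update_of_ne (ne_of_mem_of_not_mem hj hi), hx j (Finset.mem_insert_of_mem hj)]
    have hstep := enorm_le_setLIntegral_enorm_add_enorm_pderivE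
      ((contDiff_mderiv β hf).of_le (by exact_mod_cast le_top)) x i
    rw [← mderiv_add_single β i hf, hx i (Finset.mem_insert_self i S)] at hstep
    refine (hstep.trans (lintegral_mono fun s => add_le_add (hslice _ s) (hslice _ s))).trans_eq ?_
    rw [lintegral_add_left (Finset.measurable_sum _ fun _ _ => hmeasS _),
      lintegral_finsetSum _ fun _ _ => hmeasS _, lintegral_finsetSum _ fun _ _ => hmeasS _,
      Finset.sum_powerset_insert hi]
    simp_rw [lmarginal_insert _ (hmeas _) hi]
    congr 1
    refine Finset.sum_congr rfl fun T hT => ?_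
    rw [indicatorMultiIndex_insert (Finset.notMem_of_mem_powerset_of_notMem hT hi), add_assoc]

theorem lintegral_enorm_le_eLpNorm_of_measure_le {α ε : Type*} [MeasurableSpace α]
    [TopologicalSpace ε] [ContinuousENorm ε] {μ ν : Measure α} [IsProbabilityMeasure μ]
    (hμν : μ ≤ ν) {u : α → ε} (hu : AEStronglyMeasurable u μ) {p : ℝ≥0∞} (hp : 1 ≤ p) :
    ∫⁻ y, ‖u y‖ₑ ∂μ ≤ eLpNorm u p ν :=
  calc ∫⁻ y, ‖u y‖ₑ ∂μ = eLpNorm u 1 μ := eLpNorm_one_eq_lintegral_enorm.symm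
    _ ≤ eLpNorm u p μ := eLpNorm_le_eLpNorm_of_exponent_le hp hu
    _ ≤ eLpNorm u p ν := eLpNorm_mono_measure u hμν

theorem lintegral_unitCube_enorm_le_eLpNorm (hg : AEStronglyMeasurable g) {p : ℝ≥0∞} (hp : 1 ≤ p)
    (a : Fin d → ℝ) :
    ∫⁻ y, ‖g (WithLp.toLp 2 y)‖ₑ ∂Measure.pi
      (fun i => volume.restrict (Set.Ioc (a i) (a i + 1))) ≤ eLpNorm g p := by
  have hprob (i : Fin d) : IsProbabilityMeasure (volume.restrict (Set.Ioc (a i) (a i + 1))) :=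
    ⟨by simp⟩
  have hcube : Measure.pi (fun i => volume.restrict (Set.Ioc (a i) (a i + 1))) ≤ volume :=
    (Measure.restrict_pi_pi _ _).symm.trans_le Measure.restrict_le_self
  have htoLp := PiLp.volume_preserving_toLp (Fin d)
  rw [← eLpNorm_comp_measurePreserving hg htoLp]
  exact lintegral_enorm_le_eLpNorm_of_measure_le hcube
    ((hg.comp_measurePreserving htoLp).mono_measure hcube) hp

theorem enorm_mderiv_le_sum_eLpNorm (hf : ContDiff ℝ (⊤ : ℕ∞) f) {p : ℝ≥0∞} (hp : 1 ≤ p)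
    (β : Fin d → ℕ) (x : EuclideanSpace ℝ (Fin d)) :
    ‖mderiv β f x‖ₑ ≤ ∑ T : Finset (Fin d), eLpNorm (mderiv (β + indicatorMultiIndex T) f) p := by
  have hcube := enorm_mderiv_le_sum_lmarginal hf x.ofLp Finset.univ β x.ofLp fun _ _ => rfl
  rw [Finset.powerset_univ] at hcube
  simp only [lmarginal_univ] at hcube
  exact hcube.trans (Finset.sum_le_sum fun T _ => lintegral_unitCube_enorm_le_eLpNorm
    (contDiff_mderiv _ hf).continuous.aestronglyMeasurable hp _)

end Sobolev

theorem prod_factorial_succ_le_factorial_sum_add_card {ι : Type*} [Fintype ι] (α : ι → ℕ) :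
    ∏ i, (α i + 1).factorial ≤ (∑ i, α i + Fintype.card ι).factorial := by
  simpa [Finset.sum_add_distrib] using Nat.le_of_dvd (Nat.factorial_pos _)
    (Nat.prod_factorial_dvd_factorial_sum Finset.univ fun i => α i + 1)

theorem prod_factorial_add_le_prod_factorial_succ {ι : Type*} [Fintype ι] (α : ι → ℕ) {e : ι → ℕ}
    (he : e ≤ 1) : ∏ i, (α i + e i).factorial ≤ ∏ i, (α i + 1).factorial :=
  Finset.prod_le_prod' fun i _ => Nat.factorial_le (Nat.add_le_add_left (he i) (α i))

theorem mul_pow_mul_prod_factorial_add_indicatorMultiIndex_le {ι : Type*} [Fintype ι]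
    [DecidableEq ι] {C R : ℝ} (hC : 0 ≤ C) (hR : 0 ≤ R) (α : ι → ℕ) (T : Finset ι) :
    C * R ^ (∑ i, (α + indicatorMultiIndex T) i) *
        ((∏ i, ((α + indicatorMultiIndex T) i).factorial : ℕ) : ℝ) ≤
      C * R ^ (∑ i, α i) * ((∏ i, (α i + 1).factorial : ℕ) : ℝ) * R ^ T.card := by
  simp only [Pi.add_apply, Finset.sum_add_distrib, sum_indicatorMultiIndex, pow_add]
  have hfact := prod_factorial_add_le_prod_factorial_succ α (indicatorMultiIndex_le_one T)
  calc C * (R ^ (∑ i, α i) * R ^ T.card) *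
        ((∏ i, (α i + indicatorMultiIndex T i).factorial : ℕ) : ℝ)
      ≤ C * (R ^ (∑ i, α i) * R ^ T.card) * ((∏ i, (α i + 1).factorial : ℕ) : ℝ) := by gcongr
    _ = C * R ^ (∑ i, α i) * ((∏ i, (α i + 1).factorial : ℕ) : ℝ) * R ^ T.card := by ring

theorem abs_mderiv_le_of_eLpNorm_le {d : ℕ} {f : EuclideanSpace ℝ (Fin d) → ℝ}
    (hf : ContDiff ℝ (⊤ : ℕ∞) f) {p : ℝ≥0∞} (hp : 1 ≤ p) {C₁ C₂ : ℝ} (hC₁ : 0 ≤ C₁) (hC₂ : 0 ≤ C₂)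
    (hbound : ∀ β : Fin d → ℕ, eLpNorm (mderiv β f) p volume ≤
      ENNReal.ofReal (C₁ * C₂ ^ (∑ i, β i) * ((∏ i, (β i).factorial : ℕ) : ℝ)))
    (α : Fin d → ℕ) (x : EuclideanSpace ℝ (Fin d)) :
    |mderiv α f x| ≤
      C₁ * (1 + C₂) ^ d * C₂ ^ (∑ i, α i) * ((∏ i, (α i + 1).factorial : ℕ) : ℝ) := by
  have hterm (T : Finset (Fin d)) := (hbound (α + indicatorMultiIndex T)).trans
    (ENNReal.ofReal_le_ofReal
      (mul_pow_mul_prod_factorial_add_indicatorMultiIndex_le hC₁ hC₂ α T))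
  have hbinom : ∑ T : Finset (Fin d), C₂ ^ T.card = (1 + C₂) ^ d := by
    simpa [add_comm] using Finset.sum_pow_mul_eq_add_pow C₂ 1 (Finset.univ : Finset (Fin d))
  rw [← ENNReal.ofReal_le_ofReal_iff (by positivity), ← Real.enorm_eq_ofReal_abs]
  calc ‖mderiv α f x‖ₑ
      ≤ ∑ T : Finset (Fin d), eLpNorm (mderiv (α + indicatorMultiIndex T) f) p volume :=
        enorm_mderiv_le_sum_eLpNorm hf hp α x
    _ ≤ ∑ T : Finset (Fin d), ENNReal.ofReal
        (C₁ * C₂ ^ (∑ i, α i) * ((∏ i, (α i + 1).factorial : ℕ) : ℝ) * C₂ ^ T.card) :=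
        Finset.sum_le_sum fun T _ => hterm T
    _ = ENNReal.ofReal
        (C₁ * (1 + C₂) ^ d * C₂ ^ (∑ i, α i) * ((∏ i, (α i + 1).factorial : ℕ) : ℝ)) := by
        rw [← ENNReal.ofReal_sum_of_nonneg fun _ _ => by positivity, ← Finset.mul_sum, hbinom]
        congr 1; ring

section Summability

variable {d : ℕ}

theorem summable_prod_apply {κ : Fin d → Type*} {g : ∀ i, κ i → ℝ} (hg₀ : ∀ i n, 0 ≤ g i n)
    (hg : ∀ i, Summable (g i)) : Summable fun α : ∀ i, κ i => ∏ i, g i (α i) := by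
  induction d with
  | zero => exact (hasSum_fintype _).summable
  | succ d ih =>
    rw [← (Fin.consEquiv κ).summable_iff]
    have hcons := (hg 0).mul_of_nonneg (ih (fun i => hg₀ i.succ) fun i => hg i.succ) (hg₀ 0)
      fun α => Finset.prod_nonneg fun i _ => hg₀ i.succ (α i)
    exact hcons.congr fun p => by simp [Fin.prod_univ_succ, Fin.consEquiv]

theorem summable_prod_succ_mul_pow {r : ℝ} (hr₀ : 0 ≤ r) (hr : r < 1) :
    Summable fun α : Fin d → ℕ => ∏ i, ((α i + 1 : ℝ) * r ^ α i) := by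
  have hgeom : Summable fun n : ℕ => (n + 1 : ℝ) * r ^ n := by
    simpa using summable_choose_mul_geometric_of_norm_lt_one 1
      (show ‖r‖ < 1 by rwa [Real.norm_of_nonneg hr₀])
  exact summable_prod_apply (κ := fun _ => ℕ) (g := fun _ n => (n + 1 : ℝ) * r ^ n)
    (fun _ n => by positivity) fun _ => hgeom

theorem summable_div_factorial_mul_pow {u : (Fin d → ℕ) → ℝ} {C R τ : ℝ} (hR : 0 ≤ R) (hτ : 0 ≤ τ)
    (hRτ : R * τ < 1) (hu₀ : ∀ α, 0 ≤ u α)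
    (hu : ∀ α, u α ≤ C * R ^ (∑ i, α i) * ((∏ i, (α i + 1).factorial : ℕ) : ℝ)) :
    Summable fun α => u α / ((∏ i, (α i).factorial : ℕ) : ℝ) * τ ^ (∑ i, α i) := by
  refine .of_nonneg_of_le (fun α => mul_nonneg (div_nonneg (hu₀ α) (by positivity)) (by positivity))
    (fun α => ?_) ((summable_prod_succ_mul_pow (mul_nonneg hR hτ) hRτ).mul_left C)
  have hsucc : ((∏ i, (α i + 1).factorial : ℕ) : ℝ) =
      (∏ i, (α i + 1 : ℝ)) * ((∏ i, (α i).factorial : ℕ) : ℝ) := by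
    push_cast [Nat.factorial_succ]
    exact Finset.prod_mul_distrib
  have hfact : ((∏ i, (α i).factorial : ℕ) : ℝ) ≠ 0 :=
    Nat.cast_ne_zero.2 (Finset.prod_ne_zero_iff.2 fun i _ => Nat.factorial_ne_zero (α i))
  calc u α / ((∏ i, (α i).factorial : ℕ) : ℝ) * τ ^ (∑ i, α i)
      ≤ C * R ^ (∑ i, α i) * ((∏ i, (α i + 1).factorial : ℕ) : ℝ) /
          ((∏ i, (α i).factorial : ℕ) : ℝ) * τ ^ (∑ i, α i) := by gcongr; exact hu α
    _ = C * ((∏ i, (α i + 1 : ℝ)) * (R * τ) ^ (∑ i, α i)) := by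
        rw [hsucc, mul_pow]; field_simp
    _ = C * ∏ i, ((α i + 1 : ℝ) * (R * τ) ^ α i) := by
        rw [Finset.prod_mul_distrib, Finset.prod_pow_eq_pow_sum]

end Summability

theorem local_sup_bounds_general {d : ℕ} {f : EuclideanSpace ℝ (Fin d) → ℝ}
    (hf : ContDiff ℝ (⊤ : ℕ∞) f) {p : ℝ≥0∞} (hp : 1 ≤ p) {C₁ C₂ : ℝ} (hC₁ : 0 < C₁) (hC₂ : 0 ≤ C₂)
    (hbound : ∀ β : Fin d → ℕ, eLpNorm (mderiv β f) p volume ≤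
      ENNReal.ofReal (C₁ * C₂ ^ (∑ i, β i) * ((∏ i, (β i).factorial : ℕ) : ℝ)))
    {σ τ : ℝ} (hσ₀ : 0 < σ) (hσ : C₂ * σ ≤ 1) (hτ₀ : 0 ≤ τ) (hτ : C₂ * τ < 1) :
    ∃ C₀ : ℝ, 0 < C₀ ∧
      (∀ (α : Fin d → ℕ) (x : EuclideanSpace ℝ (Fin d)),
        |mderiv α f x| ≤ C₀ * (((∑ i, α i) + d).factorial : ℝ) / σ ^ (∑ i, α i)) ∧
      ∀ B : Set (EuclideanSpace ℝ (Fin d)), Summable fun α : Fin d → ℕ =>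
        (⨆ x : B, |mderiv α f x|) / ((∏ i, (α i).factorial : ℕ) : ℝ) * τ ^ (∑ i, α i) := by
  have hpt := abs_mderiv_le_of_eLpNorm_le hf hp hC₁.le hC₂ hbound
  refine ⟨C₁ * (1 + C₂) ^ d, by positivity, fun α x => ?_, fun B => ?_⟩
  · have hC₂σ : C₂ ≤ σ⁻¹ := by rwa [← one_div, le_div_iff₀ hσ₀]
    have hfact : ((∏ i, (α i + 1).factorial : ℕ) : ℝ) ≤ (((∑ i, α i) + d).factorial : ℝ) := by
      simpa only [Fintype.card_fin] using
        Nat.cast_le (α := ℝ).2 (prod_factorial_succ_le_factorial_sum_add_card α)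
    calc |mderiv α f x|
        ≤ C₁ * (1 + C₂) ^ d * C₂ ^ (∑ i, α i) * ((∏ i, (α i + 1).factorial : ℕ) : ℝ) := hpt α x
      _ ≤ C₁ * (1 + C₂) ^ d * σ⁻¹ ^ (∑ i, α i) * (((∑ i, α i) + d).factorial : ℝ) := by gcongr
      _ = _ := by rw [inv_pow]; ring
  · exact summable_div_factorial_mul_pow hC₂ hτ₀ hτ
      (fun α => Real.iSup_nonneg fun _ => abs_nonneg _)
      fun α => Real.iSup_le (fun x => hpt α x) (by positivity)

/-- The key estimate in the proof of Lemma A.1: local sup-norm bounds for the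
derivatives of `f` on a small ball, and convergence of the corresponding
Taylor-type series. -/
theorem local_sup_bounds
    (d : ℕ) (hd : 1 ≤ d)
    (f : EuclideanSpace ℝ (Fin d) → ℝ) (hf : ContDiff ℝ (⊤ : ℕ∞) f)
    (C₁ C₂ : ℝ) (hC₁ : 0 < C₁) (hC₂ : 0 < C₂)
    (hbound : ∀ β : Fin d → ℕ,
      eLpNorm (mderiv β f) 2 volume ≤
        ENNReal.ofReal (C₁ * C₂ ^ (∑ i, β i) * ((∏ i, (β i).factorial : ℕ) : ℝ)))
    (σ : ℝ) (hσ0 : 0 < σ) (hσ1 : σ ≤ 1) (hσC₂ : 2 * C₂ * σ < 1)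
    (y : EuclideanSpace ℝ (Fin d)) (τ : ℝ) (hτ0 : 0 < τ) (hτ : τ < σ / d)
    (B : Set (EuclideanSpace ℝ (Fin d))) (hB : B = Metric.ball y τ) :
    ∃ C₀ : ℝ, 0 < C₀ ∧
      (∀ α : Fin d → ℕ,
        (⨆ x : B, |mderiv α f x|) ≤
          C₀ * (((∑ i, α i) + d).factorial : ℝ) / σ ^ (∑ i, α i)) ∧
      Summable (fun α : Fin d → ℕ =>
        (⨆ x : B, |mderiv α f x|) / ((∏ i, (α i).factorial : ℕ) : ℝ) *
          τ ^ (∑ i, α i)) := by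
  have hC₂σ : C₂ * σ < 1 := by nlinarith [mul_pos hC₂ hσ0]
  have hτσ : τ < σ := hτ.trans_le (div_le_self hσ0.le (by exact_mod_cast hd))
  have hC₂τ : C₂ * τ < 1 := (mul_lt_mul_of_pos_left hτσ hC₂).trans hC₂σ
  obtain ⟨C₀, hC₀, hpt, hsum⟩ :=
    local_sup_bounds_general hf one_le_two hC₁ hC₂.le hbound hσ0 hC₂σ.le hτ0.le hC₂τ
  exact ⟨C₀, hC₀, fun α => Real.iSup_le (fun x => hpt α x) (by positivity), hsum B⟩
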